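/- Fix an integer N ≥ 2, t ∈ [0,1], n ≥ 1, integers a_1, …, a_n all ≥ N, and an integer i ≥ N. Let s^t_{N,n} be defined recursively by s^t_{N,0} = t and s^t_{N,k} = 1 − N/(a_k + s^t_{N,k−1}). Then ρ^t_N(I(a_1,…,a_n,i)) = P_{N,i}(s^t_{N,n}) · ρ^t_N(I(a_1,…,a_n)), where P_{N,i}(x) = (x+N−1)/((x+i)(x+i−1)). -/

import Mathlib

open MeasureTheory Set Real Filter

/-- The Rényi-type continued fraction map `R_N`. -/
noncomputable def RN (N : ℕ) (x : ℝ) : ℝ :=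
  if x = 1 then 0 else (N : ℝ) / (1 - x) - ⌊(N : ℝ) / (1 - x)⌋

/-- `digit N k x` is the `(k+1)`-st digit `a_{k+1}(x)`. -/
noncomputable def digit (N k : ℕ) (x : ℝ) : ℤ :=
  ⌊(N : ℝ) / (1 - (RN N)^[k] x)⌋

/-- The cylinder `I(a_1, …, a_n)`. -/
def cyl (N n : ℕ) (a : ℕ → ℤ) : Set ℝ :=
  {x | x ∈ Set.Icc (0 : ℝ) 1 ∧ Irrational x ∧ ∀ k < n, digit N k x = a k}

/-- The conditional probability measure `ρ^t_N`, with density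
`N(N-1+t)/[N-(1-x)(1-t)]²` on `[0,1]`. -/
noncomputable def rhoT (N : ℕ) (t : ℝ) : Measure ℝ :=
  (volume.restrict (Set.Icc (0 : ℝ) 1)).withDensity fun x =>
    ENNReal.ofReal ((N : ℝ) * ((N : ℝ) - 1 + t) / ((N : ℝ) - (1 - x) * (1 - t)) ^ 2)

/-- `s^t_{N,k}` built from a prescribed digit sequence `a`. -/
noncomputable def sRec (N : ℕ) (t : ℝ) (a : ℕ → ℤ) : ℕ → ℝ
  | 0 => t
  | k + 1 => 1 - (N : ℝ) / ((a k : ℝ) + sRec N t a k)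

/-! The inverse branches of `R_N` are `φ_b(y) = 1 - N/(b + y)`. The base of the square in the
density of `ρ^t`, namely `D(x, t) = N - (1 - x)(1 - t)`, is symmetric, and
`(b + y) D(φ_b(y), t) = N (b + y + t - 1) = (b + t) D(y, φ_b(t))`. Hence pulling `ρ^t` back along
`φ_b` gives `P_{N,b}(t) ρ^{φ_b(t)}`. The map `φ_b` sends `I(a_2, …, a_n)` onto `I(b, a_2, …, a_n)`,
and `φ_{a_k}` sends `s_{k-1}` to `s_k`, so iterating gives
`ρ^t(I(a_1, …, a_n)) = ∏ P_{N,a_k}(s_{k-1})`. All parameters `t > 1 - N` are admissible, because the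
maps `φ_b` with `b ≥ N` preserve this range. -/

/-- The inverse branch `y ↦ 1 - N/(b + y)` of the Rényi-type map `R_N`, inverting it on the interval
where the first digit is `b`; the digit is allowed to be real, as the analytic part needs nothing
more. -/
noncomputable def invBranch (N b y : ℝ) : ℝ :=
  1 - N / (b + y)

/-- The weight `P_{N,b}(x)`: the `ρ^x_N`-probability that the first digit is `b`. -/
noncomputable def digitWeight (N b x : ℝ) : ℝ :=
  (x + N - 1) / ((x + b) * (x + b - 1))

/-- The density of `ρ^t_N` with respect to Lebesgue measure on `[0, 1]`. -/
noncomputable def rhoDensity (N t x : ℝ) : ℝ :=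
  N * (N - 1 + t) / (N - (1 - x) * (1 - t)) ^ 2

section InvBranch

variable {N b y : ℝ}

lemma div_one_sub_invBranch (hN : N ≠ 0) (b y : ℝ) : N / (1 - invBranch N b y) = b + y := by
  rw [invBranch, sub_sub_cancel, div_div_cancel₀ hN]

lemma invBranch_injective (hN : N ≠ 0) (b : ℝ) : Function.Injective (invBranch N b) :=
  fun y z h ↦ add_left_cancel <| by
    rw [← div_one_sub_invBranch hN b y, h, div_one_sub_invBranch hN b z]

lemma measurable_invBranch (N b : ℝ) : Measurable (invBranch N b) := by
  unfold invBranch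
  fun_prop

lemma hasDerivAt_invBranch (N : ℝ) (h : b + y ≠ 0) :
    HasDerivAt (invBranch N b) (N / (b + y) ^ 2) y := by
  have h_add : HasDerivAt (fun z ↦ b + z) 1 y := (hasDerivAt_id y).const_add b
  exact (((hasDerivAt_const y N).fun_div h_add h).const_sub 1).congr_deriv (by ring)

lemma invBranch_mem_Icc (hN : 0 < N) (hb : N ≤ b) (hy : 0 ≤ y) : invBranch N b y ∈ Icc 0 1 := by
  have h_le : N / (b + y) ≤ 1 := (div_le_one (by linarith)).2 (by linarith)
  have h_nonneg : 0 ≤ N / (b + y) := div_nonneg hN.le (by linarith)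
  exact ⟨sub_nonneg.2 h_le, sub_le_self 1 h_nonneg⟩

lemma one_sub_lt_invBranch (hN : 0 < N) (h : 1 < b + y) : 1 - N < invBranch N b y :=
  sub_lt_sub_left (div_lt_self hN h) 1

end InvBranch

section Density

variable {N b y t x : ℝ}

lemma sub_one_sub_mul_one_sub_pos (hN : 0 < N) (ht : 1 - N < t) (hx : x ∈ Icc 0 1) :
    0 < N - (1 - x) * (1 - t) := by
  calc 0 < x * N + (1 - x) * (N - (1 - t)) := ?_
    _ = N - (1 - x) * (1 - t) := by ring
  rcases hx.1.eq_or_lt with rfl | hx0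
  · linarith
  · have h_left : 0 < x * N := mul_pos hx0 hN
    have h_right : 0 ≤ (1 - x) * (N - (1 - t)) := mul_nonneg (by linarith [hx.2]) (by linarith)
    linarith

lemma sub_one_sub_invBranch_mul_one_sub (N t : ℝ) (h : b + y ≠ 0) :
    N - (1 - invBranch N b y) * (1 - t) = N * (b + y + t - 1) / (b + y) := by
  rw [invBranch]
  field_simp
  ring

lemma rhoDensity_nonneg (hN : 0 ≤ N) (ht : 1 - N ≤ t) (x : ℝ) : 0 ≤ rhoDensity N t x :=
  div_nonneg (mul_nonneg hN (by linarith)) (sq_nonneg _)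

lemma measurable_rhoDensity (N t : ℝ) : Measurable (rhoDensity N t) := by
  unfold rhoDensity
  fun_prop

lemma continuousOn_rhoDensity (hN : 0 < N) (ht : 1 - N < t) :
    ContinuousOn (rhoDensity N t) (Icc 0 1) :=
  ContinuousOn.div (by fun_prop) (by fun_prop) fun _ hx ↦
    pow_ne_zero 2 (sub_one_sub_mul_one_sub_pos hN ht hx).ne'

lemma hasDerivAt_primitive_rhoDensity (h : N - (1 - x) * (1 - t) ≠ 0) :
    HasDerivAt (fun z ↦ N * z / (N - (1 - z) * (1 - t))) (rhoDensity N t x) x := by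
  have h_num : HasDerivAt (fun z ↦ N * z) (N * 1) x := (hasDerivAt_id x).const_mul N
  have h_den : HasDerivAt (fun z ↦ N - (1 - z) * (1 - t)) (-(-1 * (1 - t))) x :=
    (((hasDerivAt_id x).const_sub 1).mul_const (1 - t)).const_sub N
  refine (h_num.fun_div h_den h).congr_deriv ?_
  rw [rhoDensity]
  ring

lemma deriv_mul_rhoDensity_invBranch (hN : N ≠ 0) (hy : b + y ≠ 0) (ht : b + t ≠ 0)
    (ht' : b + t - 1 ≠ 0) :
    N / (b + y) ^ 2 * rhoDensity N t (invBranch N b y) =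
      digitWeight N b t * rhoDensity N (invBranch N b t) y := by
  have h_right : N - (1 - y) * (1 - invBranch N b t) = N * (b + y + t - 1) / (b + t) := by
    rw [mul_comm, sub_one_sub_invBranch_mul_one_sub N y ht]
    ring
  have h_mass : N - 1 + invBranch N b t = N * (b + t - 1) / (b + t) := by
    rw [invBranch]
    field_simp
    ring
  rw [rhoDensity, rhoDensity, digitWeight, sub_one_sub_invBranch_mul_one_sub N t hy, h_right,
    h_mass, add_comm t b]
  field_simp
  ring

end Density

section Measure

variable {N : ℕ} {t : ℝ}

lemma rhoT_real_apply (ht : 1 - N ≤ t) {B : Set ℝ} (hB : MeasurableSet B) (hB' : B ⊆ Icc 0 1) :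
    (rhoT N t).real B = ∫ x in B, rhoDensity N t x := by
  rw [integral_eq_lintegral_of_nonneg_ae
      (ae_of_all _ (rhoDensity_nonneg (Nat.cast_nonneg N) ht))
      (measurable_rhoDensity N t).aestronglyMeasurable,
    measureReal_def, rhoT, withDensity_apply _ hB, Measure.restrict_restrict hB,
    inter_eq_left.2 hB']
  rfl

lemma rhoT_absolutelyContinuous (N : ℕ) (t : ℝ) : rhoT N t ≪ volume :=
  (withDensity_absolutelyContinuous _ _).trans Measure.restrict_le_self.absolutelyContinuous

lemma rhoT_real_Icc (hN : 0 < N) (ht : 1 - N < t) {x : ℝ} (hx : x ∈ Icc 0 1) :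
    (rhoT N t).real (Icc 0 x) = N * x / (N - (1 - x) * (1 - t)) := by
  have hN' : (0 : ℝ) < N := Nat.cast_pos.2 hN
  have h_sub : Icc 0 x ⊆ Icc 0 1 := Icc_subset_Icc_right hx.2
  have h_cont : ContinuousOn (rhoDensity N t) (uIcc 0 x) := by
    rw [uIcc_of_le hx.1]
    exact (continuousOn_rhoDensity hN' ht).mono h_sub
  have h_deriv : ∀ z ∈ uIcc 0 x, HasDerivAt (fun z ↦ N * z / (N - (1 - z) * (1 - t)))
      (rhoDensity N t z) z := by
    intro z hz
    rw [uIcc_of_le hx.1] at hz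
    exact hasDerivAt_primitive_rhoDensity
      (sub_one_sub_mul_one_sub_pos hN' ht (h_sub hz)).ne'
  rw [rhoT_real_apply ht.le measurableSet_Icc h_sub, integral_Icc_eq_integral_Ioc,
    ← intervalIntegral.integral_of_le hx.1,
    intervalIntegral.integral_eq_sub_of_hasDerivAt h_deriv h_cont.intervalIntegrable]
  simp

lemma rhoT_real_image_invBranch (hN : 0 < N) (ht : 1 - N < t) {b : ℝ} (hb : N ≤ b)
    {B : Set ℝ} (hB : MeasurableSet B) (hB' : B ⊆ Icc 0 1) :
    (rhoT N t).real (invBranch N b '' B) =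
      digitWeight N b t * (rhoT N (invBranch N b t)).real B := by
  have hN' : (0 : ℝ) < N := Nat.cast_pos.2 hN
  have h_inj : InjOn (invBranch N b) B := (invBranch_injective hN'.ne' b).injOn
  have h_image : MeasurableSet (invBranch N b '' B) :=
    hB.image_of_measurable_injOn (measurable_invBranch N b) h_inj
  have h_image_sub : invBranch N b '' B ⊆ Icc 0 1 :=
    image_subset_iff.2 fun y hy ↦ invBranch_mem_Icc hN' hb (hB' hy).1
  have h_ne : ∀ y ∈ B, b + y ≠ 0 := fun y hy ↦ by linarith [(hB' hy).1]
  have ht' : 1 - N < invBranch N b t := one_sub_lt_invBranch hN' (by linarith)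
  rw [rhoT_real_apply ht.le h_image h_image_sub, rhoT_real_apply ht'.le hB hB',
    integral_image_eq_integral_abs_deriv_smul hB
      (fun y hy ↦ (hasDerivAt_invBranch N (h_ne y hy)).hasDerivWithinAt) h_inj,
    ← integral_const_mul]
  refine setIntegral_congr_fun hB fun y hy ↦ ?_
  rw [abs_of_nonneg (by positivity), smul_eq_mul]
  exact deriv_mul_rhoDensity_invBranch hN'.ne' (h_ne y hy) (by linarith) (by linarith)

end Measure

section Cylinder

variable {N : ℕ}

-- No case distinction is left at `x = 1`, because `N / 0 = 0` there.
lemma RN_eq_fract (N : ℕ) (x : ℝ) : RN N x = Int.fract (N / (1 - x)) := by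
  rcases eq_or_ne x 1 with rfl | hx
  · simp [RN]
  · rw [RN, if_neg hx, Int.fract]

lemma RN_mem_Icc (N : ℕ) (x : ℝ) : RN N x ∈ Icc 0 1 := by
  rw [RN_eq_fract]
  exact ⟨Int.fract_nonneg _, (Int.fract_lt_one _).le⟩

lemma measurable_RN (N : ℕ) : Measurable (RN N) := by
  rw [funext (RN_eq_fract N)]
  exact measurable_fract.comp (by fun_prop)

lemma digit_zero (N : ℕ) (x : ℝ) : digit N 0 x = ⌊N / (1 - x)⌋ := rfl

lemma digit_succ (N k : ℕ) (x : ℝ) : digit N (k + 1) x = digit N k (RN N x) := rfl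

lemma measurable_digit (N k : ℕ) : Measurable (digit N k) := by
  have h_iterate : Measurable (RN N)^[k] := (measurable_RN N).iterate k
  exact Int.measurable_floor.comp (by fun_prop)

lemma invBranch_digit_RN (hN : 0 < N) (x : ℝ) : invBranch N (digit N 0 x) (RN N x) = x := by
  rw [invBranch, digit_zero, RN_eq_fract, Int.floor_add_fract,
    div_div_cancel₀ (Nat.cast_ne_zero.2 hN.ne'), sub_sub_cancel]

lemma digit_zero_invBranch (hN : 0 < N) (b : ℤ) {y : ℝ} (hy : y ∈ Ico 0 1) :
    digit N 0 (invBranch N b y) = b := by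
  rw [digit_zero, div_one_sub_invBranch (Nat.cast_ne_zero.2 hN.ne'), Int.floor_intCast_add,
    Int.floor_eq_zero_iff.2 hy, add_zero]

lemma RN_invBranch (hN : 0 < N) (b : ℤ) {y : ℝ} (hy : y ∈ Ico 0 1) :
    RN N (invBranch N b y) = y := by
  rw [RN_eq_fract, div_one_sub_invBranch (Nat.cast_ne_zero.2 hN.ne'), Int.fract_intCast_add,
    Int.fract_eq_self.2 hy]

lemma irrational_invBranch_iff (hN : 0 < N) (b : ℤ) {y : ℝ} :
    Irrational (invBranch N b y) ↔ Irrational y := by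
  rw [invBranch, ← Nat.cast_one, irrational_natCast_sub_iff, irrational_natCast_div_iff,
    irrational_intCast_add_iff, and_iff_right hN.ne']

lemma cyl_subset_Icc (N n : ℕ) (a : ℕ → ℤ) : cyl N n a ⊆ Icc 0 1 := fun _ hx ↦ hx.1

lemma measurableSet_cyl (N n : ℕ) (a : ℕ → ℤ) : MeasurableSet (cyl N n a) := by
  have h_digits : MeasurableSet {x | ∀ k < n, digit N k x = a k} := by
    simp only [ofPred_forall]
    exact .iInter fun k ↦ .iInter fun _ ↦ measurable_digit N k (measurableSet_singleton (a k))
  exact measurableSet_Icc.inter ((countable_range ((↑) : ℚ → ℝ)).measurableSet.compl.inter h_digits)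

lemma cyl_zero_ae_eq_Icc (N : ℕ) (a : ℕ → ℤ) : cyl N 0 a =ᵐ[volume] Icc 0 1 := by
  filter_upwards [(countable_range ((↑) : ℚ → ℝ)).ae_notMem volume] with x hx
  exact propext ⟨fun h ↦ h.1, fun h ↦ ⟨h, hx, by simp⟩⟩

lemma cyl_succ_eq_image (hN : 0 < N) (n : ℕ) {a : ℕ → ℤ} (ha : N ≤ a 0) :
    cyl N (n + 1) a = invBranch N (a 0) '' cyl N n (fun k ↦ a (k + 1)) := by
  ext x
  constructor
  · rintro ⟨-, h_irr, h_digit⟩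
    have hx : invBranch N (a 0) (RN N x) = x := by
      rw [← h_digit 0 n.succ_pos, invBranch_digit_RN hN]
    rw [← hx, irrational_invBranch_iff hN] at h_irr
    exact ⟨RN N x, ⟨RN_mem_Icc N x, h_irr, fun k hk ↦ h_digit (k + 1) (by omega)⟩, hx⟩
  · rintro ⟨y, ⟨hy, h_irr, h_digit⟩, rfl⟩
    have hy' : y ∈ Ico 0 1 := ⟨hy.1, hy.2.lt_of_ne h_irr.ne_one⟩
    refine ⟨invBranch_mem_Icc (Nat.cast_pos.2 hN) (by exact_mod_cast ha) hy.1,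
      (irrational_invBranch_iff hN (a 0)).2 h_irr, ?_⟩
    rintro (_ | k) hk
    · exact digit_zero_invBranch hN (a 0) hy'
    · rw [digit_succ, RN_invBranch hN (a 0) hy']
      exact h_digit k (by omega)

end Cylinder

section CylinderMeasure

variable {N : ℕ} {t : ℝ}

lemma sRec_succ_eq_sRec_invBranch (N : ℕ) (t : ℝ) (a : ℕ → ℤ) (n : ℕ) :
    sRec N t a (n + 1) = sRec N (invBranch N (a 0) t) (fun k ↦ a (k + 1)) n := by
  induction n with
  | zero => rfl
  | succ n ih => rw [sRec, ih, sRec]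

lemma sRec_congr (N : ℕ) (t : ℝ) {a b : ℕ → ℤ} {n : ℕ} (h : ∀ k < n, a k = b k) :
    sRec N t a n = sRec N t b n := by
  induction n with
  | zero => rfl
  | succ n ih => rw [sRec, sRec, h n n.lt_succ_self, ih fun k hk ↦ h k (by omega)]

lemma rhoT_real_cyl_zero (hN : 0 < N) (ht : 1 - N < t) (a : ℕ → ℤ) :
    (rhoT N t).real (cyl N 0 a) = 1 := by
  rw [measureReal_congr ((rhoT_absolutelyContinuous N t).ae_eq (cyl_zero_ae_eq_Icc N a)),
    rhoT_real_Icc hN ht (right_mem_Icc.2 zero_le_one)]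
  simp [hN.ne']

lemma rhoT_real_cyl (hN : 0 < N) (ht : 1 - N < t) {n : ℕ} {a : ℕ → ℤ} (ha : ∀ k < n, N ≤ a k) :
    (rhoT N t).real (cyl N n a) = ∏ k ∈ Finset.range n, digitWeight N (a k) (sRec N t a k) := by
  induction n generalizing t a with
  | zero => rw [rhoT_real_cyl_zero hN ht, Finset.prod_range_zero]
  | succ n ih =>
    have ha₀ : (N : ℝ) ≤ a 0 := by exact_mod_cast ha 0 n.succ_pos
    have ht₁ : 1 - N < invBranch N (a 0) t := one_sub_lt_invBranch (Nat.cast_pos.2 hN) (by linarith)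
    rw [cyl_succ_eq_image hN n (ha 0 n.succ_pos),
      rhoT_real_image_invBranch hN ht ha₀ (measurableSet_cyl _ _ _) (cyl_subset_Icc _ _ _),
      ih ht₁ fun k hk ↦ ha (k + 1) (by omega), Finset.prod_range_succ', mul_comm]
    simp only [sRec_succ_eq_sRec_invBranch]
    rfl

end CylinderMeasure

theorem stmt2_general (N : ℕ) (hN : 0 < N) (t : ℝ) (ht : 1 - N < t)
    (n : ℕ) (a : ℕ → ℤ) (ha : ∀ k < n, (N : ℤ) ≤ a k) (i : ℤ) (hi : (N : ℤ) ≤ i) :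
    (rhoT N t (cyl N (n + 1) (Function.update a n i))).toReal
      = (sRec N t a n + (N : ℝ) - 1)
          / ((sRec N t a n + (i : ℝ)) * (sRec N t a n + (i : ℝ) - 1))
        * (rhoT N t (cyl N n a)).toReal := by
  have h_update : ∀ k < n, Function.update a n i k = a k := fun k hk ↦
    Function.update_of_ne hk.ne i a
  have h_digits : ∀ k < n + 1, (N : ℤ) ≤ Function.update a n i k :=
    Nat.forall_lt_succ_right.2 ⟨fun k hk ↦ (h_update k hk).symm ▸ ha k hk,
      (Function.update_self n i a).symm ▸ hi⟩
  have h_prefix : ∀ k ∈ Finset.range n,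
      digitWeight N (Function.update a n i k) (sRec N t (Function.update a n i) k) =
        digitWeight N (a k) (sRec N t a k) := by
    intro k hk
    have hk' : k < n := Finset.mem_range.1 hk
    rw [h_update k hk', sRec_congr N t fun j hj ↦ h_update j (hj.trans hk')]
  rw [← measureReal_def, ← measureReal_def, rhoT_real_cyl hN ht h_digits, rhoT_real_cyl hN ht ha,
    Finset.prod_range_succ, Finset.prod_congr rfl h_prefix, Function.update_self,
    sRec_congr N t h_update, mul_comm, digitWeight]

theorem stmt2 (N : ℕ) (hN : 2 ≤ N) (t : ℝ) (ht : t ∈ Set.Icc (0 : ℝ) 1)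
    (n : ℕ) (hn : 1 ≤ n) (a : ℕ → ℤ) (ha : ∀ k < n, (N : ℤ) ≤ a k)
    (i : ℤ) (hi : (N : ℤ) ≤ i) :
    (rhoT N t (cyl N (n + 1) (Function.update a n i))).toReal
      = (sRec N t a n + (N : ℝ) - 1)
          / ((sRec N t a n + (i : ℝ)) * (sRec N t a n + (i : ℝ) - 1))
        * (rhoT N t (cyl N n a)).toReal := by
  have hN' : (2 : ℝ) ≤ N := by exact_mod_cast hN
  exact stmt2_general N (by omega) t (by linarith [ht.1]) n a ha i hi
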